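/- Let 1 ≤ q < ∞ and let b ∈ SV satisfy b(t²) ∼ b(t) on (0,∞), with associated functions B₀ and B∞. Assume there exist real numbers α < 0 < β such that u ↦ u^{−α}·B∞(u) is almost decreasing on (0,1] and u ↦ u^{−β}·B₀(u) is almost increasing on (0,1] (i.e. ρ_{B∞} < 0 < π_{B₀}). Then there is a constant C > 0 such that for every non-negative measurable function f on (0,∞): (∫₀^∞ (b(t)·∫_t^∞ f(s) ds)^q dt/(t·ℓ(t)))^{1/q} ≤ C·(∫₀^∞ (t·b(t)·f(t)·ℓ(t))^q dt/(t·ℓ(t)))^{1/q}. -/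

import Mathlib

open Set MeasureTheory Real

/-- `f` is almost increasing on `S`: there is `C > 0` with `f s ≤ C * f t` whenever `s ≤ t` in `S`. -/
def AlmostIncreasingOn (f : ℝ → ℝ) (S : Set ℝ) : Prop :=
  ∃ C > (0:ℝ), ∀ s ∈ S, ∀ t ∈ S, s ≤ t → f s ≤ C * f t

/-- `f` is almost decreasing on `S`: there is `C > 0` with `f t ≤ C * f s` whenever `s ≤ t` in `S`. -/
def AlmostDecreasingOn (f : ℝ → ℝ) (S : Set ℝ) : Prop :=
  ∃ C > (0:ℝ), ∀ s ∈ S, ∀ t ∈ S, s ≤ t → f t ≤ C * f s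

/-- A measurable positive function `b` on `(0,∞)` is slowly varying if for every `ε > 0`,
`t ↦ t^ε * b t` is almost increasing and `t ↦ t^(-ε) * b t` is almost decreasing on `(0,∞)`. -/
def SlowlyVarying (b : ℝ → ℝ) : Prop :=
  Measurable b ∧ (∀ t ∈ Ioi (0:ℝ), 0 < b t) ∧
  ∀ ε > (0:ℝ), AlmostIncreasingOn (fun t => t ^ ε * b t) (Ioi 0) ∧
    AlmostDecreasingOn (fun t => t ^ (-ε) * b t) (Ioi 0)

/-- `f ∼ g` on `S`: there are `c, C > 0` with `c * g x ≤ f x ≤ C * g x` for all `x ∈ S`. -/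
def EquivOn (f g : ℝ → ℝ) (S : Set ℝ) : Prop :=
  ∃ c > (0:ℝ), ∃ C > (0:ℝ), ∀ x ∈ S, c * g x ≤ f x ∧ f x ≤ C * g x

/-- The associated function `B₀(u) = b(e^{1 - 1/u})`. -/
noncomputable def assocB0 (b : ℝ → ℝ) (u : ℝ) : ℝ := b (Real.exp (1 - 1 / u))

/-- The associated function `B∞(u) = b(e^{1/u - 1})`. -/
noncomputable def assocBinf (b : ℝ → ℝ) (u : ℝ) : ℝ := b (Real.exp (1 / u - 1))

/-- `ℓ(t) = 1 + |log t|`. -/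
noncomputable def ell (t : ℝ) : ℝ := 1 + |Real.log t|

/-- The sequence `λ_k`: `λ_k = e^{1 - e^{-k}}` for `k ≤ -1` and `λ_k = e^{e^k - 1}` for `k ≥ 0`. -/
noncomputable def lam (k : ℤ) : ℝ :=
  if k < 0 then Real.exp (1 - Real.exp (-(k : ℝ))) else Real.exp (Real.exp (k : ℝ) - 1)

open scoped ENNReal

/-- The odd function `y ↦ sign y * log (1 + |y|)`. -/
noncomputable def oddLog (y : ℝ) : ℝ := if 0 ≤ y then Real.log (1 + y) else -Real.log (1 - y)

theorem oddLog_of_nonneg {y : ℝ} (hy : 0 ≤ y) : oddLog y = Real.log (1 + y) := if_pos hy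

theorem oddLog_of_nonpos {y : ℝ} (hy : y ≤ 0) : oddLog y = -Real.log (1 - y) := by
  rcases hy.eq_or_lt with rfl | h
  · simp [oddLog]
  · exact if_neg h.not_ge

theorem measurable_oddLog : Measurable oddLog :=
  Measurable.ite measurableSet_Ici (by fun_prop) (by fun_prop)

theorem hasDerivAt_oddLog (y : ℝ) : HasDerivAt oddLog (1 + |y|)⁻¹ y := by
  have hp : ∀ x : ℝ, 0 ≤ x → HasDerivAt (fun z => Real.log (1 + z)) (1 + |x|)⁻¹ x := by
    intro x hx
    have := ((hasDerivAt_id x).const_add 1).log (by simp only [id]; positivity)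
    simpa [abs_of_nonneg hx] using this
  have hn : ∀ x : ℝ, x ≤ 0 → HasDerivAt (fun z => -Real.log (1 - z)) (1 + |x|)⁻¹ x := by
    intro x hx
    have := (((hasDerivAt_id x).const_sub 1).log (by simp only [id]; linarith)).neg
    simp only [id, neg_div, neg_neg, one_div] at this
    rw [abs_of_nonpos hx, ← sub_eq_add_neg]
    exact this
  rcases lt_trichotomy y 0 with h | rfl | h
  · refine (hn y h.le).congr_of_eventuallyEq ?_
    filter_upwards [Iio_mem_nhds h] with z hz using oddLog_of_nonpos (le_of_lt hz)
  · have h1 : HasDerivWithinAt oddLog (1 + |(0:ℝ)|)⁻¹ (Ici 0) 0 :=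
      (hp 0 le_rfl).hasDerivWithinAt.congr (fun z hz => oddLog_of_nonneg hz)
        (oddLog_of_nonneg le_rfl)
    have h2 : HasDerivWithinAt oddLog (1 + |(0:ℝ)|)⁻¹ (Iic 0) 0 :=
      (hn 0 le_rfl).hasDerivWithinAt.congr (fun z hz => oddLog_of_nonpos hz)
        (oddLog_of_nonpos le_rfl)
    simpa [Iic_union_Ici] using h2.union h1
  · refine (hp y h.le).congr_of_eventuallyEq ?_
    filter_upwards [Ioi_mem_nhds h] with z hz using oddLog_of_nonneg (le_of_lt hz)

theorem strictMono_oddLog : StrictMono oddLog :=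
  strictMono_of_hasDerivAt_pos hasDerivAt_oddLog fun _ => by positivity

theorem ell_pos (t : ℝ) : 0 < ell t := by unfold ell; positivity

theorem measurable_ell : Measurable ell := by unfold ell; fun_prop

theorem strictMonoOn_oddLog_log : StrictMonoOn (fun t => oddLog (Real.log t)) (Ioi 0) :=
  fun _ hs _ _ hst => strictMono_oddLog (Real.log_lt_log hs hst)

theorem hasDerivAt_oddLog_log {t : ℝ} (ht : 0 < t) :
    HasDerivAt (fun t => oddLog (Real.log t)) (t * ell t)⁻¹ t := by
  have := (hasDerivAt_oddLog (Real.log t)).comp t (Real.hasDerivAt_log ht.ne')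
  simpa [Function.comp_def, ell, mul_inv, mul_comm] using this

/-- The measure `dt / (t ℓ(t))` on `(0,∞)`. -/
noncomputable def logHaar : Measure ℝ :=
  (volume.restrict (Ioi 0)).withDensity fun t => (ENNReal.ofReal (t * ell t))⁻¹

instance : SFinite logHaar := by unfold logHaar; infer_instance

theorem measurable_logHaar_density :
    Measurable fun t : ℝ => (ENNReal.ofReal (t * ell t))⁻¹ := by
  have := measurable_ell
  fun_prop

theorem lintegral_logHaar {g : ℝ → ℝ≥0∞} (hg : Measurable g) :
    ∫⁻ t, g t ∂logHaar = ∫⁻ t in Ioi (0:ℝ), g t / ENNReal.ofReal (t * ell t) := by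
  rw [logHaar, lintegral_withDensity_eq_lintegral_mul _ measurable_logHaar_density hg]
  simp only [Pi.mul_apply, div_eq_mul_inv, mul_comm]

theorem ae_logHaar_pos : ∀ᵐ t ∂logHaar, 0 < t :=
  (withDensity_absolutelyContinuous _ _).ae_le (ae_restrict_mem measurableSet_Ioi)

/-- Substituting `x = oddLog (log t)` turns `dt / (t ℓ(t))` into Lebesgue measure. -/
theorem lintegral_logHaar_comp_oddLog_log_le {s T : Set ℝ} (hs : MeasurableSet s)
    (hT : ∀ t ∈ s, 0 < t → oddLog (Real.log t) ∈ T) {g : ℝ → ℝ≥0∞} (hg : Measurable g) :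
    ∫⁻ t, s.indicator (fun t => g (oddLog (Real.log t))) t ∂logHaar ≤ ∫⁻ x in T, g x := by
  have hm := measurable_oddLog
  rw [lintegral_logHaar (Measurable.indicator (by fun_prop) hs)]
  have key := lintegral_image_eq_lintegral_abs_deriv_mul (s := s ∩ Ioi 0)
    (hs.inter measurableSet_Ioi)
    (fun x hx => (hasDerivAt_oddLog_log (t := x) hx.2).hasDerivWithinAt)
    (strictMonoOn_oddLog_log.injOn.mono inter_subset_right) g
  calc _ = ∫⁻ t in s ∩ Ioi 0, ENNReal.ofReal |(t * ell t)⁻¹| * g (oddLog (Real.log t)) := by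
        rw [← Measure.restrict_restrict hs, ← lintegral_indicator hs]
        refine setLIntegral_congr_fun measurableSet_Ioi fun t ht => ?_
        have h0 : 0 < t * ell t := mul_pos ht (ell_pos t)
        by_cases h : t ∈ s
        · simp only [indicator_of_mem h]
          rw [abs_of_pos (inv_pos.2 h0), ENNReal.ofReal_inv_of_pos h0, div_eq_mul_inv, mul_comm]
        · simp [indicator_of_notMem h]
    _ ≤ _ := by
        rw [← key]
        refine lintegral_mono_set ?_
        rintro _ ⟨t, ht, rfl⟩
        exact hT t ht.1 ht.2

/-- The kernel `exp (γ (Λ t - Λ s))` on `t < s`, with `Λ = oddLog ∘ log`. -/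
noncomputable def decayKernel (γ t s : ℝ) : ℝ≥0∞ :=
  if t < s then ENNReal.ofReal (Real.exp (γ * (oddLog (Real.log t) - oddLog (Real.log s)))) else 0

theorem measurable_decayKernel (γ : ℝ) :
    Measurable (Function.uncurry (decayKernel γ)) := by
  have := measurable_oddLog
  exact Measurable.ite (measurableSet_lt measurable_fst measurable_snd) (by fun_prop) (by fun_prop)

theorem lintegral_decayKernel_right {γ t : ℝ} (hγ : 0 < γ) (ht : 0 < t) :
    ∫⁻ s, decayKernel γ t s ∂logHaar ≤ ENNReal.ofReal γ⁻¹ := by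
  set c := oddLog (Real.log t) with hc
  have h := lintegral_logHaar_comp_oddLog_log_le (s := Ioi t) (T := Ioi c) measurableSet_Ioi
    (fun s hs h0 => strictMonoOn_oddLog_log ht h0 hs)
    (g := fun x => ENNReal.ofReal (Real.exp (γ * (c - x)))) (by fun_prop)
  refine le_trans (le_of_eq ?_) (h.trans (le_of_eq ?_))
  · refine lintegral_congr fun s => ?_
    simp only [decayKernel, indicator, mem_Ioi, ← hc]
  · have e : (fun x => Real.exp (γ * (c - x))) =
        fun x => Real.exp (γ * c) * Real.exp (-γ * x) := by
      funext x; rw [← Real.exp_add]; ring_nf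
    have hi := integrableOn_exp_mul_Ioi (neg_lt_zero.2 hγ) c
    rw [← ofReal_integral_eq_lintegral_ofReal (by rw [e]; exact hi.const_mul _)
      (Filter.Eventually.of_forall fun x => (Real.exp_pos _).le), e, integral_const_mul,
      integral_exp_mul_Ioi (neg_lt_zero.2 hγ)]
    congr 1
    rw [neg_div_neg_eq, mul_div_assoc', ← Real.exp_add]
    simp

theorem lintegral_decayKernel_left {γ s : ℝ} (hγ : 0 < γ) (hs : 0 < s) :
    ∫⁻ t, decayKernel γ t s ∂logHaar ≤ ENNReal.ofReal γ⁻¹ := by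
  set c := oddLog (Real.log s) with hc
  have h := lintegral_logHaar_comp_oddLog_log_le (s := Iio s) (T := Iic c) measurableSet_Iio
    (fun t ht h0 => (strictMonoOn_oddLog_log h0 hs ht).le)
    (g := fun x => ENNReal.ofReal (Real.exp (γ * (x - c)))) (by fun_prop)
  refine le_trans (le_of_eq ?_) (h.trans (le_of_eq ?_))
  · refine lintegral_congr fun t => ?_
    simp only [decayKernel, indicator, mem_Iio, ← hc]
  · have e : (fun x => Real.exp (γ * (x - c))) =
        fun x => Real.exp (-γ * c) * Real.exp (γ * x) := by
      funext x; rw [← Real.exp_add]; ring_nf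
    have hi := integrableOn_exp_mul_Iic hγ c
    rw [← ofReal_integral_eq_lintegral_ofReal (by rw [e]; exact hi.const_mul _)
      (Filter.Eventually.of_forall fun x => (Real.exp_pos _).le), e, integral_const_mul,
      integral_exp_mul_Iic hγ]
    congr 1
    rw [mul_div_assoc', ← Real.exp_add]
    simp

/-- Jensen's inequality for a measure of total mass at most `A`. -/
theorem lintegral_mul_rpow_le {X : Type*} [MeasurableSpace X] {μ : Measure X} {q : ℝ}
    (hq : 1 ≤ q) {k h : X → ℝ≥0∞} (hk : Measurable k) (hh : Measurable h) {A : ℝ≥0∞}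
    (hA : ∫⁻ y, k y ∂μ ≤ A) :
    (∫⁻ y, k y * h y ∂μ) ^ q ≤ A ^ (q - 1) * ∫⁻ y, k y * h y ^ q ∂μ := by
  have hq0 : 0 < q := by linarith
  have key := eLpNorm'_le_eLpNorm'_mul_rpow_measure_univ (μ := μ.withDensity k) (p := 1) (q := q)
    one_pos hq hh.aestronglyMeasurable
  simp only [eLpNorm', enorm_eq_self, ENNReal.rpow_one, div_one] at key
  rw [lintegral_withDensity_eq_lintegral_mul _ hk hh,
    lintegral_withDensity_eq_lintegral_mul _ hk (hh.pow_const q),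
    withDensity_apply _ MeasurableSet.univ, Measure.restrict_univ] at key
  calc _ ≤ _ := ENNReal.rpow_le_rpow key hq0.le
    _ = (∫⁻ y, k y ∂μ) ^ (q - 1) * ∫⁻ y, k y * h y ^ q ∂μ := by
      rw [ENNReal.mul_rpow_of_nonneg _ _ hq0.le, ← ENNReal.rpow_mul, ← ENNReal.rpow_mul,
        one_div_mul_cancel hq0.ne', ENNReal.rpow_one, sub_mul, one_div_mul_cancel hq0.ne',
        one_mul, mul_comm]
      rfl
    _ ≤ _ := by gcongr

/-- The Schur test on `L^q`. -/
theorem lintegral_rpow_lintegral_kernel_le {X : Type*} [MeasurableSpace X] {μ : Measure X}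
    [SFinite μ] {q : ℝ} (hq : 1 ≤ q) {k : X → X → ℝ≥0∞}
    (hk : Measurable (Function.uncurry k)) {h : X → ℝ≥0∞} (hh : Measurable h) {A : ℝ≥0∞}
    (hr : ∀ᵐ x ∂μ, ∫⁻ y, k x y ∂μ ≤ A) (hl : ∀ᵐ y ∂μ, ∫⁻ x, k x y ∂μ ≤ A) :
    ∫⁻ x, (∫⁻ y, k x y * h y ∂μ) ^ q ∂μ ≤ A ^ q * ∫⁻ y, h y ^ q ∂μ := by
  have hkh : Measurable (Function.uncurry fun x y => k x y * h y ^ q) :=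
    hk.mul ((hh.comp measurable_snd).pow_const q)
  calc _ ≤ ∫⁻ x, A ^ (q - 1) * ∫⁻ y, k x y * h y ^ q ∂μ ∂μ := by
        refine lintegral_mono_ae ?_
        filter_upwards [hr] with x hx
        exact lintegral_mul_rpow_le hq (hk.comp measurable_prodMk_left) hh hx
    _ = A ^ (q - 1) * ∫⁻ y, (∫⁻ x, k x y ∂μ) * h y ^ q ∂μ := by
        rw [lintegral_const_mul _ hkh.lintegral_prod_right, lintegral_lintegral_swap hkh.aemeasurable]
        congr 1
        refine lintegral_congr fun y => ?_
        exact lintegral_mul_const _ (hk.comp measurable_prodMk_right)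
    _ ≤ A ^ (q - 1) * ∫⁻ y, A * h y ^ q ∂μ := by
        gcongr 1
        refine lintegral_mono_ae ?_
        filter_upwards [hl] with y hy
        gcongr
    _ = _ := by
        rw [lintegral_const_mul _ (hh.pow_const q), ← mul_assoc]
        congr 1
        conv_lhs => rw [← ENNReal.rpow_one A, ← ENNReal.rpow_mul, one_mul]
        rw [← ENNReal.rpow_add_of_nonneg _ _ (by linarith) zero_le_one, sub_add_cancel]

theorem exists_decay_of_one_le {b : ℝ → ℝ} {α : ℝ}
    (hBinf : AlmostDecreasingOn (fun u => u ^ (-α) * assocBinf b u) (Ioc 0 1)) :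
    ∃ K > (0:ℝ), ∀ t s : ℝ, 1 ≤ t → t ≤ s →
      b t ≤ K * Real.exp (-α * (oddLog (Real.log t) - oddLog (Real.log s))) * b s := by
  obtain ⟨K, hK, h⟩ := hBinf
  refine ⟨K, hK, fun t s ht hts => ?_⟩
  have hs : 1 ≤ s := ht.trans hts
  have hlt := Real.log_nonneg ht
  have hls := Real.log_nonneg hs
  have hl : Real.log t ≤ Real.log s := Real.log_le_log (by linarith) hts
  have e : ∀ r : ℝ, 1 ≤ r → (1 / (1 + Real.log r)) ^ (-α) * assocBinf b (1 / (1 + Real.log r)) =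
      Real.exp (α * oddLog (Real.log r)) * b r := by
    intro r hr
    have hlr := Real.log_nonneg hr
    rw [assocBinf, one_div_one_div, add_sub_cancel_left, Real.exp_log (by linarith),
      oddLog_of_nonneg hlr, Real.rpow_def_of_pos (by positivity), one_div, Real.log_inv]
    ring_nf
  have hmem : ∀ r : ℝ, 1 ≤ r → 1 / (1 + Real.log r) ∈ Ioc (0:ℝ) 1 := by
    intro r hr
    have hlr := Real.log_nonneg hr
    exact ⟨by positivity, by rw [div_le_one (by positivity)]; linarith⟩
  have key := h _ (hmem s hs) _ (hmem t ht) (by gcongr)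
  simp only [e t ht, e s hs] at key
  calc b t = Real.exp (-(α * oddLog (Real.log t))) *
        (Real.exp (α * oddLog (Real.log t)) * b t) := by
        rw [← mul_assoc, ← Real.exp_add]; simp
    _ ≤ Real.exp (-(α * oddLog (Real.log t))) *
        (K * (Real.exp (α * oddLog (Real.log s)) * b s)) := by gcongr
    _ = _ := by
        rw [show -α * (oddLog (Real.log t) - oddLog (Real.log s)) =
          -(α * oddLog (Real.log t)) + α * oddLog (Real.log s) by ring, Real.exp_add]
        ring

theorem exists_decay_of_le_one {b : ℝ → ℝ} {β : ℝ}
    (hB0 : AlmostIncreasingOn (fun u => u ^ (-β) * assocB0 b u) (Ioc 0 1)) :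
    ∃ K > (0:ℝ), ∀ t s : ℝ, 0 < t → t ≤ s → s ≤ 1 →
      b t ≤ K * Real.exp (β * (oddLog (Real.log t) - oddLog (Real.log s))) * b s := by
  obtain ⟨K, hK, h⟩ := hB0
  refine ⟨K, hK, fun t s ht hts hs1 => ?_⟩
  have hs : 0 < s := ht.trans_le hts
  have hl : Real.log t ≤ Real.log s := Real.log_le_log ht hts
  have hls := Real.log_nonpos hs.le hs1
  have e : ∀ r : ℝ, 0 < r → r ≤ 1 →
      (1 / (1 - Real.log r)) ^ (-β) * assocB0 b (1 / (1 - Real.log r)) =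
      Real.exp (-β * oddLog (Real.log r)) * b r := by
    intro r hr hr1
    have hlr := Real.log_nonpos hr.le hr1
    have hpos : 0 < 1 - Real.log r := by linarith
    rw [assocB0, one_div_one_div, sub_sub_cancel, Real.exp_log hr,
      oddLog_of_nonpos hlr, Real.rpow_def_of_pos (by positivity), one_div, Real.log_inv]
    ring_nf
  have hmem : ∀ r : ℝ, 0 < r → r ≤ 1 → 1 / (1 - Real.log r) ∈ Ioc (0:ℝ) 1 := by
    intro r hr hr1
    have hlr := Real.log_nonpos hr.le hr1
    have hpos : 0 < 1 - Real.log r := by linarith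
    exact ⟨by positivity, by rw [div_le_one hpos]; linarith⟩
  have key := h _ (hmem t ht (hts.trans hs1)) _ (hmem s hs hs1)
    (one_div_le_one_div_of_le (by linarith) (by linarith))
  simp only [e t ht (hts.trans hs1), e s hs hs1] at key
  calc b t = Real.exp (β * oddLog (Real.log t)) *
        (Real.exp (-β * oddLog (Real.log t)) * b t) := by
        rw [← mul_assoc, ← Real.exp_add]; simp
    _ ≤ Real.exp (β * oddLog (Real.log t)) *
        (K * (Real.exp (-β * oddLog (Real.log s)) * b s)) := by gcongr
    _ = _ := by
        rw [show β * (oddLog (Real.log t) - oddLog (Real.log s)) =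
          β * oddLog (Real.log t) + -β * oddLog (Real.log s) by ring, Real.exp_add]
        ring

theorem exists_decay {b : ℝ → ℝ} (hpos : ∀ t ∈ Ioi (0:ℝ), 0 < b t) {α β : ℝ}
    (hBinf : AlmostDecreasingOn (fun u => u ^ (-α) * assocBinf b u) (Ioc 0 1))
    (hB0 : AlmostIncreasingOn (fun u => u ^ (-β) * assocB0 b u) (Ioc 0 1)) :
    ∃ K > (0:ℝ), ∀ t s : ℝ, 0 < t → t ≤ s →
      b t ≤ K * Real.exp (min (-α) β * (oddLog (Real.log t) - oddLog (Real.log s))) * b s := by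
  obtain ⟨K₁, hK₁, h₁⟩ := exists_decay_of_one_le hBinf
  obtain ⟨K₂, hK₂, h₂⟩ := exists_decay_of_le_one hB0
  have hmono : ∀ t s : ℝ, 0 < t → t ≤ s → oddLog (Real.log t) - oddLog (Real.log s) ≤ 0 :=
    fun t s ht hts =>
      sub_nonpos.2 (strictMonoOn_oddLog_log.monotoneOn ht (ht.trans_le hts) hts)
  have g₁ : ∀ t s : ℝ, 1 ≤ t → t ≤ s →
      b t ≤ K₁ * Real.exp (min (-α) β * (oddLog (Real.log t) - oddLog (Real.log s))) * b s := by
    intro t s ht hts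
    have hbs := (hpos s (mem_Ioi.2 (by linarith))).le
    refine (h₁ t s ht hts).trans ?_
    gcongr K₁ * Real.exp ?_ * b s
    exact mul_le_mul_of_nonpos_right (min_le_left _ _) (hmono t s (by linarith) hts)
  have g₂ : ∀ t s : ℝ, 0 < t → t ≤ s → s ≤ 1 →
      b t ≤ K₂ * Real.exp (min (-α) β * (oddLog (Real.log t) - oddLog (Real.log s))) * b s := by
    intro t s ht hts hs
    have hbs := (hpos s (mem_Ioi.2 (by linarith))).le
    refine (h₂ t s ht hts hs).trans ?_
    gcongr K₂ * Real.exp ?_ * b s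
    exact mul_le_mul_of_nonpos_right (min_le_right _ _) (hmono t s ht hts)
  have hone : ∀ K : ℝ, b 1 ≤ K * Real.exp (min (-α) β *
      (oddLog (Real.log 1) - oddLog (Real.log 1))) * b 1 → 1 ≤ K := by
    intro K h
    rw [sub_self, mul_zero, Real.exp_zero, mul_one] at h
    exact le_of_mul_le_mul_right (by simpa using h) (hpos 1 (mem_Ioi.2 one_pos))
  have hone₁ := hone K₁ (g₁ 1 1 le_rfl le_rfl)
  have hone₂ := hone K₂ (g₂ 1 1 one_pos le_rfl le_rfl)
  refine ⟨K₂ * K₁, by positivity, fun t s ht hts => ?_⟩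
  have hbs := (hpos s (mem_Ioi.2 (by linarith))).le
  rcases le_total 1 t with h1t | ht1
  · refine (g₁ t s h1t hts).trans ?_
    gcongr
    exact le_mul_of_one_le_left hK₁.le hone₂
  rcases le_total s 1 with hs1 | h1s
  · refine (g₂ t s ht hts hs1).trans ?_
    gcongr
    exact le_mul_of_one_le_right hK₂.le hone₁
  · calc b t ≤ K₂ * Real.exp (min (-α) β * (oddLog (Real.log t) - oddLog (Real.log 1))) * b 1 :=
          g₂ t 1 ht ht1 le_rfl
      _ ≤ K₂ * Real.exp (min (-α) β * (oddLog (Real.log t) - oddLog (Real.log 1))) *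
          (K₁ * Real.exp (min (-α) β * (oddLog (Real.log 1) - oddLog (Real.log s))) * b s) := by
          gcongr
          exact g₁ 1 s le_rfl h1s
      _ = _ := by
          rw [show min (-α) β * (oddLog (Real.log t) - oddLog (Real.log s)) =
            min (-α) β * (oddLog (Real.log t) - oddLog (Real.log 1)) +
            min (-α) β * (oddLog (Real.log 1) - oddLog (Real.log s)) by ring, Real.exp_add]
          ring

theorem tail_le_decayKernel {b f : ℝ → ℝ} (hb : Measurable b) (hf : Measurable f)
    (hf0 : ∀ t, 0 ≤ f t) {K γ : ℝ} (hK : 0 < K)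
    (hdecay : ∀ t s : ℝ, 0 < t → t ≤ s →
      b t ≤ K * Real.exp (γ * (oddLog (Real.log t) - oddLog (Real.log s))) * b s)
    {t : ℝ} (ht : 0 < t) :
    ENNReal.ofReal (b t) * ∫⁻ s in Ioi t, ENNReal.ofReal (f s) ≤
      ENNReal.ofReal K *
        ∫⁻ s, decayKernel γ t s * ENNReal.ofReal (s * b s * f s * ell s) ∂logHaar := by
  have hell := measurable_ell
  have hk : Measurable (decayKernel γ t) :=
    (measurable_decayKernel γ).comp measurable_prodMk_left
  rw [lintegral_logHaar (by fun_prop), ← lintegral_const_mul _ (by fun_prop),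
    ← lintegral_const_mul _ (by fun_prop)]
  refine le_trans ?_ (lintegral_mono_set (Ioi_subset_Ioi ht.le))
  refine setLIntegral_mono' measurableSet_Ioi fun s hs => ?_
  have hs0 : 0 < s := ht.trans hs
  have hl := ell_pos s
  rw [decayKernel, if_pos (mem_Ioi.1 hs), ← ENNReal.ofReal_mul (Real.exp_pos _).le,
    ← ENNReal.ofReal_div_of_pos (by positivity), ← ENNReal.ofReal_mul hK.le,
    ← ENNReal.ofReal_mul' (hf0 s)]
  refine ENNReal.ofReal_le_ofReal ?_
  refine (mul_le_mul_of_nonneg_right (hdecay t s ht (le_of_lt hs)) (hf0 s)).trans (le_of_eq ?_)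
  field_simp

theorem limiting_hardy_inequality_ii (q : ℝ) (hq : 1 ≤ q) (b : ℝ → ℝ)
    (hb : SlowlyVarying b) (hsq : EquivOn (fun t => b (t ^ 2)) b (Ioi 0))
    (α β : ℝ) (hα : α < 0) (hβ : 0 < β)
    (hBinf : AlmostDecreasingOn (fun u => u ^ (-α) * assocBinf b u) (Ioc 0 1))
    (hB0 : AlmostIncreasingOn (fun u => u ^ (-β) * assocB0 b u) (Ioc 0 1)) :
    ∃ C > (0:ℝ), ∀ f : ℝ → ℝ, Measurable f → (∀ t, 0 ≤ f t) →
      (∫⁻ t in Ioi (0:ℝ),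
          (ENNReal.ofReal (b t) * ∫⁻ s in Ioi t, ENNReal.ofReal (f s)) ^ q
            / ENNReal.ofReal (t * ell t)) ^ (1 / q)
        ≤ ENNReal.ofReal C *
          (∫⁻ t in Ioi (0:ℝ),
            ENNReal.ofReal (t * b t * f t * ell t) ^ q
              / ENNReal.ofReal (t * ell t)) ^ (1 / q) := by
  obtain ⟨hbm, hpos, -⟩ := hb
  obtain ⟨K, hK, hdecay⟩ := exists_decay hpos hBinf hB0
  have hγ : 0 < min (-α) β := lt_min (by linarith) hβ
  set γ := min (-α) β
  have hq0 : 0 < q := by linarith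
  refine ⟨K * γ⁻¹, by positivity, fun f hf hf0 => ?_⟩
  have hell := measurable_ell
  have hkm := measurable_decayKernel γ
  have hh : Measurable fun t => ENNReal.ofReal (t * b t * f t * ell t) := by fun_prop
  have hT : Measurable fun t =>
      ∫⁻ s, decayKernel γ t s * ENNReal.ofReal (s * b s * f s * ell s) ∂logHaar :=
    (hkm.mul (hh.comp measurable_snd)).lintegral_prod_right
  rw [← lintegral_logHaar (hh.pow_const q)]
  have schur := lintegral_rpow_lintegral_kernel_le (μ := logHaar) hq hkm hh
    (ae_logHaar_pos.mono fun t ht => lintegral_decayKernel_right hγ ht)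
    (ae_logHaar_pos.mono fun s hs => lintegral_decayKernel_left hγ hs)
  have main : ∫⁻ t in Ioi (0:ℝ),
      (ENNReal.ofReal (b t) * ∫⁻ s in Ioi t, ENNReal.ofReal (f s)) ^ q
        / ENNReal.ofReal (t * ell t) ≤
      ENNReal.ofReal (K * γ⁻¹) ^ q *
        ∫⁻ t, ENNReal.ofReal (t * b t * f t * ell t) ^ q ∂logHaar := by
    calc _ ≤ ∫⁻ t in Ioi (0:ℝ), (ENNReal.ofReal K *
          ∫⁻ s, decayKernel γ t s * ENNReal.ofReal (s * b s * f s * ell s) ∂logHaar) ^ q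
            / ENNReal.ofReal (t * ell t) := by
          refine setLIntegral_mono' measurableSet_Ioi fun t ht => ?_
          gcongr ?_ ^ q / _
          exact tail_le_decayKernel hbm hf hf0 hK hdecay ht
      _ = ENNReal.ofReal K ^ q * ∫⁻ t, (∫⁻ s, decayKernel γ t s *
            ENNReal.ofReal (s * b s * f s * ell s) ∂logHaar) ^ q ∂logHaar := by
          rw [← lintegral_logHaar ((hT.const_mul _).pow_const q),
            ← lintegral_const_mul _ (hT.pow_const q)]
          simp only [ENNReal.mul_rpow_of_nonneg _ _ hq0.le]
      _ ≤ _ := by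
          rw [ENNReal.ofReal_mul hK.le, ENNReal.mul_rpow_of_nonneg _ _ hq0.le, mul_assoc]
          gcongr
  refine (ENNReal.rpow_le_rpow main (by positivity)).trans (le_of_eq ?_)
  rw [ENNReal.mul_rpow_of_nonneg _ _ (by positivity), ← ENNReal.rpow_mul,
    mul_one_div_cancel hq0.ne', ENNReal.rpow_one]
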